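/- Define f : ℝ² → ℝ by f(y,t) = 0 if t ≤ 0, f(y,t) = 2t/y if 0 < t ≤ y²/2, and f(y,t) = y if t > y²/2. Then f is continuous on ℝ², locally Lipschitz on ℝ² \ {(0,0)}, and f belongs to W^{1,p}_loc(ℝ²) for every p with 1 ≤ p < 3, but f ∉ W^{1,3}_loc(ℝ²). -/

import Mathlib

/-!
The function has the closed form `F8 (y, t) = max 0 (min (y²) (2t)) / y`, valid also for `y = 0`
where both sides vanish. It is a locally Lipschitz map followed by division, hence locally Lipschitz
where `y ≠ 0`; near a point `(0, t)` with `t ≠ 0` it is either `0` or the first coordinate, and at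
the origin continuity follows from `|F8 (y, t)| ≤ |y|`.

On every line parallel to an axis, `F8` is continuous and differentiable off at most two points,
with a bounded derivative. The fundamental theorem of calculus off a countable set gives integration
by parts on lines (`line_parts`), and Fubini shows that the pointwise partial derivatives `G1`, `G2`
are the weak ones. `G1` is bounded by `1`. For `G2`, which is `2/y` on `{0 < t ≤ y²/2}`,
integrating out `t` gives `∫ |G2 (y, t)|^p dt = (y²/2) |2/y|^p`, a multiple of `|y|^(2-p)`, which is
integrable near `0` when `p < 3` and is `4/|y|` when `p = 3`. Since weak derivatives are unique almost
everywhere, no other choice of derivative can help for `p = 3`.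
-/

open MeasureTheory

/-- The function of the first example. -/
noncomputable def F8 (p : ℝ × ℝ) : ℝ :=
  if p.2 ≤ 0 then 0 else if p.2 ≤ p.1 ^ 2 / 2 then 2 * p.2 / p.1 else p.1

/-- g is the distributional derivative of f in the direction v, and is locally integrable. -/
def IsWeakDeriv (v : ℝ × ℝ) (f g : ℝ × ℝ → ℝ) : Prop :=
  (∀ K : Set (ℝ × ℝ), IsCompact K → IntegrableOn g K) ∧
  ∀ φ : ℝ × ℝ → ℝ, ContDiff ℝ (⊤ : ℕ∞) φ → HasCompactSupport φ →
    ∫ p, f p * fderiv ℝ φ p v = - ∫ p, g p * φ p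

/-- f belongs to W^{1,p}_loc(ℝ²). -/
def MemW1pLoc (f : ℝ × ℝ → ℝ) (p : ℝ) : Prop :=
  ∃ g₁ g₂ : ℝ × ℝ → ℝ, IsWeakDeriv (1, 0) f g₁ ∧ IsWeakDeriv (0, 1) f g₂ ∧
    ∀ K : Set (ℝ × ℝ), IsCompact K →
      IntegrableOn (fun x => |f x| ^ p) K ∧ IntegrableOn (fun x => |g₁ x| ^ p) K ∧
        IntegrableOn (fun x => |g₂ x| ^ p) K

open Set Filter Topology

/-! ### Closed form and regularity of the function -/

lemma F8_eq (p : ℝ × ℝ) : F8 p = max 0 (min (p.1 ^ 2) (2 * p.2)) / p.1 := by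
  obtain ⟨y, t⟩ := p
  simp only [F8]
  split_ifs with h1 h2
  · rw [max_eq_left ((min_le_right _ _).trans (by linarith))]; simp
  · rw [min_eq_right (by linarith), max_eq_right (by linarith)]
  · rw [min_eq_left (by linarith), max_eq_right (by positivity)]
    by_cases hy : y = 0
    · simp [hy]
    · field_simp

lemma abs_F8_le (p : ℝ × ℝ) : |F8 p| ≤ |p.1| := by
  rw [F8_eq, abs_div, abs_of_nonneg (le_max_left _ _)]
  refine div_le_of_le_mul₀ (abs_nonneg _) (abs_nonneg _) ?_
  rw [abs_mul_abs_self]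
  exact max_le (mul_self_nonneg _) ((min_le_left _ _).trans (by rw [sq]))

lemma lipschitzOnWith_congr {f g : ℝ × ℝ → ℝ} {K : NNReal} {s : Set (ℝ × ℝ)}
    (hf : LipschitzOnWith K f s) (h : ∀ p ∈ s, g p = f p) : LipschitzOnWith K g s := by
  intro p hp q hq
  rw [h p hp, h q hq]
  exact hf hp hq

lemma F8_locLip (q : ℝ × ℝ) (hq : q ≠ (0, 0)) :
    ∃ (K : NNReal) (U : Set (ℝ × ℝ)), IsOpen U ∧ q ∈ U ∧
      U ⊆ {x : ℝ × ℝ | x ≠ (0, 0)} ∧ LipschitzOnWith K F8 U := by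
  -- It suffices to find some neighbourhood of `q` on which the function is Lipschitz.
  suffices h : ∃ K : NNReal, ∃ V ∈ 𝓝 q, LipschitzOnWith K F8 V by
    obtain ⟨K, V, hV, hL⟩ := h
    obtain ⟨W, hWV, hW, hqW⟩ := mem_nhds_iff.1 hV
    exact ⟨K, W ∩ {x | x ≠ (0, 0)}, hW.inter isOpen_ne, ⟨hqW, hq⟩, inter_subset_right,
      hL.mono (inter_subset_left.trans hWV)⟩
  obtain ⟨y, t⟩ := q
  by_cases hy : y = 0
  · subst hy
    have ht : t ≠ 0 := fun h => hq (by rw [h])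
    rcases ht.lt_or_gt with ht | ht
    · refine ⟨0, {p | p.2 < 0}, (isOpen_lt continuous_snd continuous_const).mem_nhds ht, ?_⟩
      refine lipschitzOnWith_congr (LipschitzWith.const (0 : ℝ)).lipschitzOnWith ?_
      intro p hp
      simp [F8, le_of_lt (show p.2 < 0 from hp)]
    · refine ⟨1, {p | 0 < p.2 ∧ p.1 ^ 2 / 2 < p.2}, ?_, ?_⟩
      · refine IsOpen.mem_nhds ?_ ?_
        · exact (isOpen_lt continuous_const continuous_snd).inter
            (isOpen_lt (by fun_prop) continuous_snd)
        · simpa using ht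
      · refine lipschitzOnWith_congr LipschitzWith.prod_fst.lipschitzOnWith ?_
        rintro p ⟨h1, h2⟩
        simp [F8, not_le.2 h1, not_le.2 h2]
  · have hN : LocallyLipschitz fun p : ℝ × ℝ => (max 0 (min (p.1 ^ 2) (2 * p.2)), p.1) := by
      refine LocallyLipschitz.prodMk (LocallyLipschitz.const_max (LocallyLipschitz.min ?_ ?_) 0) ?_
      all_goals exact ContDiff.locallyLipschitz (𝕂 := ℝ) (by fun_prop)
    obtain ⟨K₁, V, hV, hL₁⟩ := hN (y, t)
    have hD : ContDiffAt ℝ 1 (fun z : ℝ × ℝ => z.1 / z.2) (max 0 (min (y ^ 2) (2 * t)), y) :=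
      ContDiffAt.div (by fun_prop) (by fun_prop) hy
    obtain ⟨K₂, W, hW, hL₂⟩ := hD.exists_lipschitzOnWith
    refine ⟨K₂ * K₁, V ∩ (fun p : ℝ × ℝ => (max 0 (min (p.1 ^ 2) (2 * p.2)), p.1)) ⁻¹' W,
      inter_mem hV (hN.continuous.continuousAt hW), ?_⟩
    refine lipschitzOnWith_congr (hL₂.comp (hL₁.mono inter_subset_left) fun p hp => hp.2) ?_
    intro p _
    simp [F8_eq]

lemma F8_continuous : Continuous F8 := by
  rw [continuous_iff_continuousAt]
  intro q
  by_cases hq : q = (0, 0)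
  · subst hq
    have h0 : F8 (0, 0) = 0 := by simp [F8]
    rw [ContinuousAt, h0]
    refine squeeze_zero_norm (a := fun p : ℝ × ℝ => |p.1|) abs_F8_le ?_
    have : Continuous fun p : ℝ × ℝ => |p.1| := by fun_prop
    simpa using this.tendsto (0, 0)
  · obtain ⟨K, U, hU, hqU, -, hL⟩ := F8_locLip q hq
    exact hL.continuousOn.continuousAt (hU.mem_nhds hqU)

/-! ### The pointwise partial derivatives -/

/-- The partial derivative of `F8` in the first variable `y`, off the interfaces. -/
noncomputable def G1 (p : ℝ × ℝ) : ℝ :=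
  if p.2 ≤ 0 then 0 else if p.2 ≤ p.1 ^ 2 / 2 then -(2 * p.2 / p.1 ^ 2) else 1

/-- The partial derivative of `F8` in the second variable `t`, off the interfaces. -/
noncomputable def G2 (p : ℝ × ℝ) : ℝ :=
  if p.2 ≤ 0 then 0 else if p.2 ≤ p.1 ^ 2 / 2 then 2 / p.1 else 0

lemma measurable_G1 : Measurable G1 := by
  unfold G1
  refine Measurable.ite (measurableSet_le (by fun_prop) (by fun_prop)) (by fun_prop) ?_
  exact Measurable.ite (measurableSet_le (by fun_prop) (by fun_prop)) (by fun_prop) (by fun_prop)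

lemma measurable_G2 : Measurable G2 := by
  unfold G2
  refine Measurable.ite (measurableSet_le (by fun_prop) (by fun_prop)) (by fun_prop) ?_
  exact Measurable.ite (measurableSet_le (by fun_prop) (by fun_prop)) (by fun_prop) (by fun_prop)

lemma abs_G1_le (p : ℝ × ℝ) : |G1 p| ≤ 1 := by
  unfold G1
  split_ifs with h1 h2
  · simp
  · push Not at h1
    rw [abs_neg, abs_of_nonneg (by positivity)]
    exact div_le_one_of_le₀ (by linarith) (by positivity)
  · simp

lemma abs_G2_le (p : ℝ × ℝ) : |G2 p| ≤ |2 / p.1| := by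
  unfold G2
  split_ifs <;> simp

lemma hasDerivAt_fst (t y : ℝ) (hy : y ∉ ({√(2 * t), -√(2 * t)} : Set ℝ)) :
    HasDerivAt (fun y => F8 (y, t)) (G1 (y, t)) y := by
  by_cases ht : t ≤ 0
  · simp only [F8, G1, ht, if_true]
    exact hasDerivAt_const _ _
  have hne : y ^ 2 / 2 ≠ t := by
    intro h
    apply hy
    have h2 : 2 * t = y ^ 2 := by linarith
    rw [h2, Real.sqrt_sq_eq_abs]
    rcases abs_choice y with h | h <;> simp [h]
  have hc : Continuous fun y : ℝ => y ^ 2 / 2 := by fun_prop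
  rcases hne.lt_or_gt with h | h
  · have hG : G1 (y, t) = 1 := by simp [G1, ht, not_le.2 h]
    rw [hG]
    refine (hasDerivAt_id y).congr_of_eventuallyEq ?_
    filter_upwards [(isOpen_lt hc continuous_const).mem_nhds h] with z hz
    simp [F8, ht, not_le.2 (show z ^ 2 / 2 < t from hz)]
  · have hy0 : y ≠ 0 := by
      rintro rfl
      norm_num at h
      linarith
    have hG : G1 (y, t) = -(2 * t / y ^ 2) := by simp [G1, ht, h.le]
    rw [hG]
    have hd : HasDerivAt (fun z : ℝ => 2 * t / z) (-(2 * t / y ^ 2)) y := by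
      have := (hasDerivAt_inv hy0).const_mul (2 * t)
      simpa [div_eq_mul_inv] using this
    refine hd.congr_of_eventuallyEq ?_
    filter_upwards [(isOpen_lt continuous_const hc).mem_nhds h] with z hz
    simp [F8, ht, (show t < z ^ 2 / 2 from hz).le]

lemma hasDerivAt_snd (y t : ℝ) (ht : t ∉ ({0, y ^ 2 / 2} : Set ℝ)) :
    HasDerivAt (fun t => F8 (y, t)) (G2 (y, t)) t := by
  simp only [mem_insert_iff, mem_singleton_iff, not_or] at ht
  obtain ⟨h0, h1⟩ := ht
  rcases Ne.lt_or_gt h0 with h0 | h0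
  · have hG : G2 (y, t) = 0 := by simp [G2, h0.le]
    rw [hG]
    refine (hasDerivAt_const t (0 : ℝ)).congr_of_eventuallyEq ?_
    filter_upwards [Iio_mem_nhds h0] with z hz
    simp [F8, (mem_Iio.1 hz).le]
  rcases Ne.lt_or_gt h1 with h1 | h1
  · have hG : G2 (y, t) = 2 / y := by simp [G2, not_le.2 h0, h1.le]
    rw [hG]
    have hd : HasDerivAt (fun z : ℝ => 2 * z / y) (2 / y) t := by
      simpa using ((hasDerivAt_id t).const_mul 2).div_const y
    refine hd.congr_of_eventuallyEq ?_
    filter_upwards [Ioo_mem_nhds h0 h1] with z hz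
    simp [F8, not_le.2 hz.1, hz.2.le]
  · have hG : G2 (y, t) = 0 := by simp [G2, not_le.2 h1]
    rw [hG]
    refine (hasDerivAt_const t y).congr_of_eventuallyEq ?_
    filter_upwards [Ioi_mem_nhds h0, Ioi_mem_nhds h1] with z hz hz'
    simp [F8, not_le.2 (mem_Ioi.1 hz), not_le.2 (mem_Ioi.1 hz')]

/-! ### Weak derivatives by integration by parts on lines -/

/-- Integration by parts on a line, against a test function vanishing outside `(-R, R)`, for a
continuous function differentiable off a countable set with bounded measurable derivative. -/
lemma line_parts {u u' φ φ' : ℝ → ℝ} {s : Set ℝ} {R C : ℝ} (hs : s.Countable)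
    (hu : Continuous u) (hd : ∀ x, x ∉ s → HasDerivAt u (u' x) x) (hm : Measurable u')
    (hb : ∀ x, |u' x| ≤ C) (hφ : ∀ x, HasDerivAt φ (φ' x) x) (hφ' : Continuous φ')
    (hR : ∀ x, R ≤ |x| → φ x = 0) (hR' : ∀ x, R ≤ |x| → φ' x = 0) :
    ∫ x, u x * φ' x = -∫ x, u' x * φ x := by
  have hφc : Continuous φ := continuous_iff_continuousAt.2 fun x => (hφ x).continuousAt
  have hcs : ∀ ψ : ℝ → ℝ, (∀ x, R ≤ |x| → ψ x = 0) → HasCompactSupport ψ := by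
    intro ψ hψ
    refine HasCompactSupport.intro (isCompact_closedBall (0 : ℝ) R) fun x hx => hψ x ?_
    simp only [Metric.mem_closedBall, dist_zero_right, Real.norm_eq_abs, not_le] at hx
    exact hx.le
  have hi1 : Integrable fun x => u x * φ' x :=
    (hu.mul hφ').integrable_of_hasCompactSupport (hcs _ fun x hx => by simp [hR' x hx])
  have hi2 : Integrable fun x => u' x * φ x :=
    (hφc.integrable_of_hasCompactSupport (hcs _ hR)).bdd_mul (c := C) hm.aestronglyMeasurable
      (Eventually.of_forall hb)
  have hsupp : Function.support (fun x => u' x * φ x + u x * φ' x) ⊆ Ioc (-R) R := by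
    intro x hx
    have : |x| < R := by
      by_contra! h
      exact hx (by simp [hR x h, hR' x h])
    exact ⟨(abs_lt.1 this).1, (abs_lt.1 this).2.le⟩
  have hsum : ∫ x, (u' x * φ x + u x * φ' x) = 0 := by
    rw [← intervalIntegral.integral_eq_integral_of_support_subset hsupp,
      integral_eq_of_hasDerivAt_off_countable (fun x => u x * φ x) _ hs
        (hu.mul hφc).continuousOn (fun x hx => (hd x hx.2).mul (hφ x))
        (hi2.add hi1).intervalIntegrable]
    rw [hR R (le_abs_self R), hR (-R) (by rw [abs_neg]; exact le_abs_self R)]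
    simp
  rw [integral_add hi2 hi1] at hsum
  linarith

/-- A compactly supported function on the plane and its differential vanish outside a square. -/
lemma exists_radius {φ : ℝ × ℝ → ℝ} (hc : HasCompactSupport φ) :
    ∃ R : ℝ, ∀ p : ℝ × ℝ, (R ≤ |p.1| ∨ R ≤ |p.2|) → φ p = 0 ∧ fderiv ℝ φ p = 0 := by
  obtain ⟨R, hR⟩ := hc.isBounded.exists_norm_le
  refine ⟨R + 1, fun p hp => ?_⟩
  have hp' : p ∉ tsupport φ := by
    intro h
    have h1 := hR p h
    have h2 := norm_fst_le p
    have h3 := norm_snd_le p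
    rw [Real.norm_eq_abs] at h2 h3
    rcases hp with hp | hp <;> linarith
  exact ⟨image_eq_zero_of_notMem_tsupport hp',
    Function.notMem_support.1 fun h => hp' (support_fderiv_subset ℝ h)⟩

/-- The left-hand integrand of the weak formulation is continuous with compact support. -/
lemma integrable_F8_mul {φ : ℝ × ℝ → ℝ} (hφ : ContDiff ℝ (⊤ : ℕ∞) φ) (hc : HasCompactSupport φ)
    (v : ℝ × ℝ) : Integrable fun p => F8 p * fderiv ℝ φ p v := by
  have h1 : Continuous fun p => fderiv ℝ φ p v :=
    (hφ.continuous_fderiv (by simp)).clm_apply continuous_const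
  exact (F8_continuous.mul h1).integrable_of_hasCompactSupport
    ((hc.fderiv_apply (𝕜 := ℝ) v).mul_left)

lemma integrable_mul_test {g φ : ℝ × ℝ → ℝ} (hg : ∀ K, IsCompact K → IntegrableOn g K)
    (hφ : Continuous φ) (hc : HasCompactSupport φ) : Integrable fun p => g p * φ p := by
  have hl : LocallyIntegrable g := locallyIntegrable_iff.2 fun K hK => hg K hK
  simpa [mul_comm] using hl.integrable_smul_left_of_hasCompactSupport hφ hc

lemma isWeakDeriv_G1 : IsWeakDeriv (1, 0) F8 G1 := by
  have hloc : ∀ K : Set (ℝ × ℝ), IsCompact K → IntegrableOn G1 K := fun K hK =>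
    Measure.integrableOn_of_bounded hK.measure_lt_top.ne measurable_G1.aestronglyMeasurable
      (M := 1) (Eventually.of_forall abs_G1_le)
  refine ⟨hloc, fun φ hφ hc => ?_⟩
  obtain ⟨R, hR⟩ := exists_radius hc
  have hi1 := integrable_F8_mul hφ hc (1, 0)
  have hi2 := integrable_mul_test hloc hφ.continuous hc
  rw [Measure.volume_eq_prod] at hi1 hi2 ⊢
  rw [integral_prod_symm _ hi1, integral_prod_symm _ hi2, ← integral_neg]
  refine integral_congr_ae (Eventually.of_forall fun t => ?_)
  refine line_parts (s := {√(2 * t), -√(2 * t)}) (R := R) (C := 1) (by simp)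
    (F8_continuous.comp (by fun_prop)) (hasDerivAt_fst t)
    (measurable_G1.comp (by fun_prop)) (fun y => abs_G1_le _) (fun y => ?_)
    (((hφ.continuous_fderiv (by simp)).comp (by fun_prop)).clm_apply continuous_const)
    (fun y hy => (hR (y, t) (Or.inl hy)).1) (fun y hy => by simp [(hR (y, t) (Or.inl hy)).2])
  exact ((hφ.differentiable (by simp)) (y, t)).hasFDerivAt.comp_hasDerivAt y
    ((hasDerivAt_id y).prodMk (hasDerivAt_const y t))

/-- Fubini reduces the weak formulation in the direction `t` to lines; local integrability of `G2`
is a separate matter. -/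
lemma isWeakDeriv_G2 (hloc : ∀ K : Set (ℝ × ℝ), IsCompact K → IntegrableOn G2 K) :
    IsWeakDeriv (0, 1) F8 G2 := by
  refine ⟨hloc, fun φ hφ hc => ?_⟩
  obtain ⟨R, hR⟩ := exists_radius hc
  have hi1 := integrable_F8_mul hφ hc (0, 1)
  have hi2 := integrable_mul_test hloc hφ.continuous hc
  rw [Measure.volume_eq_prod] at hi1 hi2 ⊢
  rw [integral_prod _ hi1, integral_prod _ hi2, ← integral_neg]
  refine integral_congr_ae (Eventually.of_forall fun y => ?_)
  refine line_parts (s := {0, y ^ 2 / 2}) (R := R) (C := |2 / y|) (by simp)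
    (F8_continuous.comp (by fun_prop)) (hasDerivAt_snd y)
    (measurable_G2.comp (by fun_prop)) (fun t => abs_G2_le _) (fun t => ?_)
    (((hφ.continuous_fderiv (by simp)).comp (by fun_prop)).clm_apply continuous_const)
    (fun t ht => (hR (y, t) (Or.inr ht)).1) (fun t ht => by simp [(hR (y, t) (Or.inr ht)).2])
  exact ((hφ.differentiable (by simp)) (y, t)).hasFDerivAt.comp_hasDerivAt t
    ((hasDerivAt_const t y).prodMk (hasDerivAt_id t))

/-! ### Integrability of powers of the derivative in `t` -/

lemma G2_section {p : ℝ} (hp : 0 < p) (y : ℝ) :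
    (fun t => |G2 (y, t)| ^ p) = (Ioc 0 (y ^ 2 / 2)).indicator fun _ => |2 / y| ^ p := by
  funext t
  by_cases h1 : t ≤ 0
  · simp [G2, h1, indicator, not_lt.2 h1, Real.zero_rpow hp.ne']
  by_cases h2 : t ≤ y ^ 2 / 2
  · simp [G2, h1, h2, indicator, not_le.1 h1]
  · simp [G2, h1, h2, indicator, Real.zero_rpow hp.ne']

lemma measurable_G2_rpow (p : ℝ) : Measurable fun x => |G2 x| ^ p :=
  (measurable_G2.abs).pow_const p

lemma integrableOn_G2_rpow {p : ℝ} (hp : 1 ≤ p) (hp3 : p < 3) {K : Set (ℝ × ℝ)}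
    (hK : IsCompact K) : IntegrableOn (fun x => |G2 x| ^ p) K := by
  obtain ⟨R, hR⟩ := hK.isBounded.exists_norm_le
  have hsub : K ⊆ Metric.ball (0 : ℝ) (R + 1) ×ˢ (univ : Set ℝ) := by
    intro x hx
    have h1 := hR x hx
    have h2 := norm_fst_le x
    simp only [mem_prod, Metric.mem_ball, dist_zero_right, mem_univ, and_true]
    linarith
  refine IntegrableOn.mono_set ?_ hsub
  rw [IntegrableOn, Measure.volume_eq_prod, ← Measure.prod_restrict, Measure.restrict_univ,
    integrable_prod_iff (measurable_G2_rpow p).aestronglyMeasurable]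
  have hpow : ∀ y t : ℝ, ‖|G2 (y, t)| ^ p‖ = |G2 (y, t)| ^ p := fun y t =>
    Real.norm_of_nonneg (by positivity)
  simp only [hpow]
  have hsec : ∀ y : ℝ, ∫ t, |G2 (y, t)| ^ p = y ^ 2 / 2 * |2 / y| ^ p := by
    intro y
    rw [G2_section (by linarith), integral_indicator_const _ measurableSet_Ioc,
      Real.volume_real_Ioc_of_le (by positivity)]
    simp
  refine ⟨Eventually.of_forall fun y => ?_, ?_⟩
  · rw [G2_section (by linarith), integrable_indicator_iff measurableSet_Ioc]
    simp
  · simp only [hsec]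
    refine integrableOn_ball_of_norm_le_rpow (C := 2 ^ p / 2) (α := p - 2) (by simp)
      (by simp; linarith) (Eventually.of_forall fun y => ?_)
      (Measurable.aestronglyMeasurable (by fun_prop))
    rw [Real.norm_of_nonneg (by positivity), Real.norm_eq_abs]
    by_cases hy : y = 0
    · simp only [hy, abs_zero]
      have : (0 : ℝ) ≤ 0 ^ (-(p - 2)) := Real.rpow_nonneg le_rfl _
      norm_num
      positivity
    · have hy' : 0 < |y| := abs_pos.2 hy
      refine le_of_eq ?_
      rw [abs_div, Real.div_rpow (abs_nonneg _) (abs_nonneg _), neg_sub, Real.rpow_sub hy',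
        abs_two, ← sq_abs y, Real.rpow_two]
      ring

/-- On the unit square the cube of `G2` fails to be integrable: integrating out `t` leaves
`4 / y`. -/
lemma not_integrableOn_G2 :
    ¬ IntegrableOn (fun x => |G2 x| ^ (3 : ℝ)) (Icc (0 : ℝ) 1 ×ˢ Icc (0 : ℝ) 1) := by
  intro h
  rw [IntegrableOn, Measure.volume_eq_prod, ← Measure.prod_restrict,
    integrable_prod_iff (measurable_G2_rpow 3).aestronglyMeasurable] at h
  have h2 : IntegrableOn (fun y : ℝ => 4 * y⁻¹) (Icc 0 1) := by
    refine IntegrableOn.congr_fun h.2 (fun y hy => ?_) measurableSet_Icc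
    have hpow : ∀ t : ℝ, ‖|G2 (y, t)| ^ (3 : ℝ)‖ = |G2 (y, t)| ^ (3 : ℝ) := fun t =>
      Real.norm_of_nonneg (by positivity)
    have hy2 : y ^ 2 / 2 ≤ 1 := by nlinarith [hy.1, hy.2]
    simp only [hpow]
    rw [G2_section (by norm_num), integral_indicator_const _ measurableSet_Ioc,
      measureReal_restrict_apply measurableSet_Ioc,
      inter_eq_left.2 (Ioc_subset_Icc_self.trans (Icc_subset_Icc_right hy2)),
      Real.volume_real_Ioc_of_le (by positivity), abs_of_nonneg (div_nonneg zero_le_two hy.1)]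
    have h3 : (2 / y) ^ (3 : ℝ) = (2 / y) ^ 3 := by
      rw [← Real.rpow_natCast]; norm_num
    rw [h3, smul_eq_mul]
    by_cases hy0 : y = 0
    · simp [hy0]
    · field_simp
      ring
  have h4 : IntegrableOn (fun y : ℝ => y⁻¹) (Icc 0 1) := by
    refine (h2.const_mul (1 / 4)).congr (Eventually.of_forall fun y => ?_)
    simp only
    ring
  have h5 : IntervalIntegrable (fun y : ℝ => y⁻¹) volume 0 1 :=
    (intervalIntegrable_iff_integrableOn_Icc_of_le zero_le_one).2 h4
  rw [intervalIntegrable_inv_iff] at h5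
  simp at h5

lemma integrableOn_G2 {K : Set (ℝ × ℝ)} (hK : IsCompact K) : IntegrableOn G2 K := by
  have h := integrableOn_G2_rpow le_rfl (by norm_num) hK
  simp only [Real.rpow_one] at h
  exact (integrable_norm_iff measurable_G2.aestronglyMeasurable).1 h

theorem stmt_8 :
    Continuous F8 ∧
    (∀ q : ℝ × ℝ, q ≠ (0, 0) → ∃ (K : NNReal) (U : Set (ℝ × ℝ)), IsOpen U ∧ q ∈ U ∧
      U ⊆ {x : ℝ × ℝ | x ≠ (0, 0)} ∧ LipschitzOnWith K F8 U) ∧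
    (∀ p : ℝ, 1 ≤ p → p < 3 → MemW1pLoc F8 p) ∧
    ¬ MemW1pLoc F8 3 := by
  have hG2 := isWeakDeriv_G2 fun K hK => integrableOn_G2 hK
  refine ⟨F8_continuous, F8_locLip, fun p hp hp3 => ?_, ?_⟩
  · refine ⟨G1, G2, isWeakDeriv_G1, hG2, fun K hK => ⟨?_, ?_, integrableOn_G2_rpow hp hp3 hK⟩⟩
    · exact (F8_continuous.abs.rpow_const fun x => Or.inr (by linarith)).continuousOn
        |>.integrableOn_compact hK
    · refine Measure.integrableOn_of_bounded hK.measure_lt_top.ne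
        (measurable_G1.abs.pow_const p).aestronglyMeasurable (M := 1)
        (Eventually.of_forall fun x => ?_)
      rw [Real.norm_of_nonneg (by positivity)]
      exact Real.rpow_le_one (abs_nonneg _) (abs_G1_le x) (by linarith)
  · rintro ⟨_, g, -, hg, hK⟩
    have hae : ∀ᵐ x, g x = G2 x := by
      refine ae_eq_of_integral_contDiff_smul_eq (locallyIntegrable_iff.2 fun K hK => hg.1 K hK)
        (locallyIntegrable_iff.2 fun K hK => hG2.1 K hK) fun φ hφ hc => ?_
      have h1 := hg.2 φ hφ hc
      rw [hG2.2 φ hφ hc, neg_inj] at h1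
      simpa [mul_comm] using h1.symm
    refine not_integrableOn_G2 ?_
    refine ((hK _ (isCompact_Icc.prod isCompact_Icc)).2.2).congr ?_
    filter_upwards [ae_restrict_of_ae hae] with x hx
    rw [hx]
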